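/- arXiv:cs/0207064 — 3 statements merged into one kernel-verified Lean document; each statement's English description precedes it below -/
import Mathlib

section
/- Let T₁ and T₂ be sets of propositional formulas and let P, Q ⊆ L(T₁) ∪ L(T₂) be sets of variables with P ⊆ L(T₁). Let γ be a set of formulas logically equivalent to Cn^{L(T₁) ∩ L(T₂)}(T₂). Then for every formula φ ∈ 𝓛(T₁), if Circ[T₁ ∪ T₂;P;Q] ⊨ φ, then Circ[T₁ ∪ γ;P;Q] ⊨ φ. -/
namespace NMR

/-- Propositional formulas over a variable type `V`. -/
inductive PropForm (V : Type*) : Type _ where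
  | var : V → PropForm V
  | tru : PropForm V
  | fls : PropForm V
  | neg : PropForm V → PropForm V
  | conj : PropForm V → PropForm V → PropForm V
  | disj : PropForm V → PropForm V → PropForm V
  | impl : PropForm V → PropForm V → PropForm V

variable {V : Type*}

/-- Truth value of a formula under a valuation. -/
def PropForm.eval (ν : V → Bool) : PropForm V → Bool
  | .var v => ν v
  | .tru => true
  | .fls => false
  | .neg φ => !(φ.eval ν)
  | .conj φ ψ => φ.eval ν && ψ.eval ν
  | .disj φ ψ => φ.eval ν || ψ.eval ν
  | .impl φ ψ => !(φ.eval ν) || ψ.eval ν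

/-- The set of variables occurring in a formula. -/
def PropForm.vars : PropForm V → Set V
  | .var v => {v}
  | .tru => ∅
  | .fls => ∅
  | .neg φ => φ.vars
  | .conj φ ψ => φ.vars ∪ ψ.vars
  | .disj φ ψ => φ.vars ∪ ψ.vars
  | .impl φ ψ => φ.vars ∪ ψ.vars

/-- `ν ⊨ φ`. -/
def Sat (ν : V → Bool) (φ : PropForm V) : Prop := φ.eval ν = true

/-- `ν ⊨ T` for a set of formulas. -/
def SatSet (ν : V → Bool) (T : Set (PropForm V)) : Prop := ∀ φ ∈ T, Sat ν φ

/-- `T ⊨ φ`. -/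
def Entails (T : Set (PropForm V)) (φ : PropForm V) : Prop :=
  ∀ ν : V → Bool, SatSet ν T → Sat ν φ

/-- `T ⊨ Γ` for a set `Γ`. -/
def EntailsSet (T Γ : Set (PropForm V)) : Prop := ∀ φ ∈ Γ, Entails T φ

/-- A tautology is satisfied by every valuation. -/
def Tautology (φ : PropForm V) : Prop := ∀ ν : V → Bool, Sat ν φ

/-- `L(T)`: the set of variables occurring in a set of formulas. -/
def varsOf (T : Set (PropForm V)) : Set V := ⋃ φ ∈ T, φ.vars

/-- `𝓛(S)`: the set of formulas all of whose variables lie in `S`. -/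
def FormsOver (S : Set V) : Set (PropForm V) := {φ | φ.vars ⊆ S}

/-- `Cn^S(T)`: the formulas in `𝓛(S)` entailed by `T`. -/
def Cn (S : Set V) (T : Set (PropForm V)) : Set (PropForm V) :=
  {φ | φ.vars ⊆ S ∧ Entails T φ}

/-- Two sets of formulas are logically equivalent iff they have the same models. -/
def EquivTheories (T T' : Set (PropForm V)) : Prop :=
  ∀ ν : V → Bool, SatSet ν T ↔ SatSet ν T'

/-- `ν ≤_{P,Q} ν'`. -/
def circLe (P Q : Set V) (ν ν' : V → Bool) : Prop :=
  (∀ x, x ∉ P ∪ Q → ν x = ν' x) ∧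
    {x | x ∈ P ∧ ν x = true} ⊆ {x | x ∈ P ∧ ν' x = true}

/-- `ν <_{P,Q} ν'`. -/
def circLt (P Q : Set V) (ν ν' : V → Bool) : Prop :=
  circLe P Q ν ν' ∧ {x | x ∈ P ∧ ν x = true} ⊂ {x | x ∈ P ∧ ν' x = true}

/-- `ν` is a model of `Circ[T;P;Q]`. -/
def CircModel (T : Set (PropForm V)) (P Q : Set V) (ν : V → Bool) : Prop :=
  SatSet ν T ∧ ¬ ∃ ν' : V → Bool, SatSet ν' T ∧ circLt P Q ν' ν

/-- `Circ[T;P;Q] ⊨ φ`. -/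
def CircEntails (T : Set (PropForm V)) (P Q : Set V) (φ : PropForm V) : Prop :=
  ∀ ν : V → Bool, CircModel T P Q ν → Sat ν φ

theorem eval_congr_vars (φ : PropForm V) (ν μ : V → Bool) (h : ∀ x ∈ φ.vars, ν x = μ x) :
    φ.eval ν = φ.eval μ := by
  induction φ with
  | var v => exact h v rfl
  | tru => rfl
  | fls => rfl
  | neg φ ih => simp only [PropForm.eval, ih h]
  | conj φ ψ ih1 ih2 =>
    simp only [PropForm.eval, ih1 fun x hx => h x (Or.inl hx), ih2 fun x hx => h x (Or.inr hx)]
  | disj φ ψ ih1 ih2 =>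
    simp only [PropForm.eval, ih1 fun x hx => h x (Or.inl hx), ih2 fun x hx => h x (Or.inr hx)]
  | impl φ ψ ih1 ih2 =>
    simp only [PropForm.eval, ih1 fun x hx => h x (Or.inl hx), ih2 fun x hx => h x (Or.inr hx)]

theorem satSet_congr {T : Set (PropForm V)} {S : Set V} {ν μ : V → Bool}
    (hT : ∀ φ ∈ T, φ.vars ⊆ S) (h : ∀ x ∈ S, ν x = μ x) (hs : SatSet ν T) : SatSet μ T := by
  intro φ hφ
  have := hs φ hφ
  unfold Sat at *
  rwa [← eval_congr_vars φ ν μ fun x hx => h x (hT φ hφ hx)]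

theorem vars_subset_varsOf (T : Set (PropForm V)) : ∀ φ ∈ T, φ.vars ⊆ varsOf T :=
  fun _ hφ _ hx => Set.mem_biUnion hφ hx

theorem continuous_eval_form (φ : PropForm V) : Continuous (fun ν : V → Bool => φ.eval ν) := by
  induction φ with
  | var v => exact continuous_apply v
  | tru => exact continuous_const
  | fls => exact continuous_const
  | neg φ ih => exact (continuous_of_discreteTopology (f := fun a : Bool => !a)).comp ih
  | conj φ ψ ih1 ih2 =>
    exact (continuous_of_discreteTopology (f := fun p : Bool × Bool => p.1 && p.2)).comp
      (ih1.prodMk ih2)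
  | disj φ ψ ih1 ih2 =>
    exact (continuous_of_discreteTopology (f := fun p : Bool × Bool => p.1 || p.2)).comp
      (ih1.prodMk ih2)
  | impl φ ψ ih1 ih2 =>
    exact (continuous_of_discreteTopology (f := fun p : Bool × Bool => !p.1 || p.2)).comp
      (ih1.prodMk ih2)

/-- A formula over `S` saying that a valuation differs from `ν` somewhere on `l`. -/
theorem exists_diff (S : Set V) (ν : V → Bool) (l : List S) :
    ∃ χ : PropForm V, χ.vars ⊆ S ∧ ∀ μ, Sat μ χ ↔ ∃ s ∈ l, μ s.1 ≠ ν s.1 := by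
  induction l with
  | nil => exact ⟨.fls, by simp [PropForm.vars], by simp [Sat, PropForm.eval]⟩
  | cons s l ih =>
    obtain ⟨χ, h1, h2⟩ := ih
    simp only [Sat] at h2
    cases h : ν s.1 with
    | true =>
      refine ⟨.disj (.neg (.var s.1)) χ, ?_, fun μ => ?_⟩
      · exact Set.union_subset (Set.singleton_subset_iff.2 s.2) h1
      · simp [Sat, PropForm.eval, h2, h]
    | false =>
      refine ⟨.disj (.var s.1) χ, ?_, fun μ => ?_⟩
      · exact Set.union_subset (Set.singleton_subset_iff.2 s.2) h1
      · simp [Sat, PropForm.eval, h2, h]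

theorem exists_ext (S : Set V) (T : Set (PropForm V)) (ν : V → Bool)
    (h : SatSet ν (Cn S T)) : ∃ μ, SatSet μ T ∧ ∀ x ∈ S, μ x = ν x := by
  by_contra hne
  have hK : IsCompact {μ : V → Bool | SatSet μ T} := by
    apply IsClosed.isCompact
    have : {μ : V → Bool | SatSet μ T} = ⋂ φ ∈ T, {μ | φ.eval μ = true} := by
      ext μ; simp [SatSet, Sat]
    rw [this]
    exact isClosed_biInter fun φ _ => isClosed_eq (continuous_eval_form φ) continuous_const
  obtain ⟨u, hu⟩ := hK.elim_finite_subfamily_closed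
    (fun s : S => {μ : V → Bool | μ s.1 = ν s.1})
    (fun s => isClosed_eq (continuous_apply _) continuous_const) (by
      rw [Set.eq_empty_iff_forall_notMem]
      rintro μ ⟨h1, h2⟩
      simp only [Set.mem_iInter, Set.mem_setOf_eq] at h2
      exact hne ⟨μ, h1, fun x hx => h2 ⟨x, hx⟩⟩)
  obtain ⟨χ, h1, h2⟩ := exists_diff S ν u.toList
  have h3 : Sat ν χ := by
    refine h χ ⟨h1, fun μ hμ => (h2 μ).2 ?_⟩
    by_contra hc
    push Not at hc
    have : μ ∈ (∅ : Set (V → Bool)) := by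
      rw [← hu]
      refine ⟨hμ, ?_⟩
      simp only [Set.mem_iInter, Set.mem_setOf_eq]
      exact fun s hs => hc s (Finset.mem_toList.2 hs)
    exact this
  obtain ⟨s, _, hs⟩ := (h2 ν).1 h3
  exact hs rfl

/-- replacing `T₂` by `γ ≡ Cn^{L(T₁) ∩ L(T₂)}(T₂)` preserves
circumscriptive consequences in `𝓛(T₁)`. -/
theorem circ_T_gamma {V : Type*} (T₁ T₂ γ : Set (PropForm V)) (P Q : Set V)
    (hPQ : P ∪ Q ⊆ varsOf T₁ ∪ varsOf T₂) (hP : P ⊆ varsOf T₁)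
    (hγ : EquivTheories γ (Cn (varsOf T₁ ∩ varsOf T₂) T₂)) :
    ∀ φ ∈ FormsOver (varsOf T₁),
      CircEntails (T₁ ∪ T₂) P Q φ → CircEntails (T₁ ∪ γ) P Q φ := by
  classical
  intro φ hφ hc ν ⟨hν, hmin⟩
  have hν1 : SatSet ν T₁ := fun ψ h => hν ψ (Or.inl h)
  have hνγ := (hγ ν).1 fun ψ h => hν ψ (Or.inr h)
  obtain ⟨μ, hμ, hag⟩ := exists_ext _ _ _ hνγ
  let σ : V → Bool := fun x => if x ∈ varsOf T₁ then ν x else if x ∈ varsOf T₂ then μ x else ν x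
  have hσ1 : ∀ x ∈ varsOf T₁, ν x = σ x := fun x hx => by simp [σ, hx]
  have hσ2 : ∀ x ∈ varsOf T₂, μ x = σ x := fun x hx => by
    by_cases h : x ∈ varsOf T₁
    · simp [σ, h, hag x ⟨h, hx⟩]
    · simp [σ, h, hx]
  have hs : Sat σ φ := by
    apply hc
    constructor
    · rintro ψ (h | h)
      · exact satSet_congr (vars_subset_varsOf T₁) hσ1 hν1 ψ h
      · exact satSet_congr (vars_subset_varsOf T₂) hσ2 hμ ψ h
    · rintro ⟨ν', hν', ⟨hle1, -⟩, hlt⟩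
      apply hmin
      let τ : V → Bool := fun x => if x ∈ varsOf T₁ then ν' x else ν x
      have hτ : ∀ x ∈ varsOf T₁, ν' x = τ x := fun x hx => by simp [τ, hx]
      have e1 : {x | x ∈ P ∧ τ x = true} = {x | x ∈ P ∧ ν' x = true} := by
        ext x
        exact and_congr_right fun hx => by rw [hτ x (hP hx)]
      have e2 : {x | x ∈ P ∧ ν x = true} = {x | x ∈ P ∧ σ x = true} := by
        ext x
        exact and_congr_right fun hx => by rw [hσ1 x (hP hx)]
      have hlt' : {x | x ∈ P ∧ τ x = true} ⊂ {x | x ∈ P ∧ ν x = true} := by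
        rw [e1, e2]; exact hlt
      refine ⟨τ, ?_, ⟨fun x hx => ?_, hlt'.subset⟩, hlt'⟩
      · rintro ψ (h | h)
        · exact satSet_congr (vars_subset_varsOf T₁) hτ (fun ψ h => hν' ψ (Or.inl h)) ψ h
        · refine (hγ τ).2 ?_ ψ h
          refine satSet_congr (S := varsOf T₁ ∩ varsOf T₂) (ν := ν') (fun ψ h => h.1)
            (fun x hx => hτ x hx.1) ?_
          exact fun ψ h => h.2 ν' fun χ hχ => hν' χ (Or.inr hχ)
      · by_cases h : x ∈ varsOf T₁
        · rw [← hτ x h, hle1 x hx, hσ1 x h]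
        · simp [τ, h]
  unfold Sat at *
  rwa [eval_congr_vars φ ν σ fun x hx => hσ1 x (hφ hx)]

end NMR
end

section
/- (Interpolation for Circumscription 2.) Let T be a set of propositional formulas and P, Q sets of variables such that P ∪ Q ⊇ L(T), and let L₂ be any set of variables. Then the set γ := Cn^{L(T) ∩ (L₂ ∪ P)}(T) satisfies: γ ⊆ 𝓛(T) ∩ 𝓛(L₂ ∪ P), T ⊨ γ, and for every formula φ ∈ 𝓛(L₂): Circ[T;P;Q] ⊨ φ if and only if Circ[γ;P;Q] ⊨ φ. -/
namespace NMR

variable {V : Type*}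

theorem PropForm.eval_congr {ν μ : V → Bool} (φ : PropForm V)
    (h : ∀ x ∈ φ.vars, ν x = μ x) : φ.eval ν = φ.eval μ := by
  induction φ with
  | var v => exact h v rfl
  | tru => rfl
  | fls => rfl
  | neg φ ih => simp only [PropForm.eval]; rw [ih h]
  | conj φ ψ ih1 ih2 | disj φ ψ ih1 ih2 | impl φ ψ ih1 ih2 =>
    simp only [PropForm.eval]
    rw [ih1 fun x hx => h x (Or.inl hx), ih2 fun x hx => h x (Or.inr hx)]

theorem PropForm.continuous_eval (φ : PropForm V) :
    Continuous fun ν : V → Bool => φ.eval ν := by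
  induction φ with
  | var v => exact continuous_apply v
  | tru => exact continuous_const
  | fls => exact continuous_const
  | neg φ ih => exact (continuous_of_discreteTopology (f := Bool.not)).comp ih
  | conj φ ψ ih1 ih2 =>
    exact (continuous_of_discreteTopology (f := fun p : Bool × Bool => p.1 && p.2)).comp
      (ih1.prodMk ih2)
  | disj φ ψ ih1 ih2 =>
    exact (continuous_of_discreteTopology (f := fun p : Bool × Bool => p.1 || p.2)).comp
      (ih1.prodMk ih2)
  | impl φ ψ ih1 ih2 =>
    exact (continuous_of_discreteTopology (f := fun p : Bool × Bool => !p.1 || p.2)).comp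
      (ih1.prodMk ih2)

/-- The clause saying that the valuation differs from `ν` somewhere on the list. -/
def diffClause (ν : V → Bool) : List V → PropForm V
  | [] => .fls
  | x :: l => .disj (if ν x = true then .neg (.var x) else .var x) (diffClause ν l)

theorem diffClause_vars (ν : V → Bool) (l : List V) :
    (diffClause ν l).vars ⊆ {x | x ∈ l} := by
  induction l with
  | nil => simp [diffClause, PropForm.vars]
  | cons x l ih =>
    intro y hy
    rcases hy with hy | hy
    · split_ifs at hy
      · have : y = x := hy
        simp [this]
      · have : y = x := hy
        simp [this]
    · exact List.mem_cons_of_mem _ (ih hy)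

theorem diffClause_eval (ν μ : V → Bool) (l : List V) :
    (diffClause ν l).eval μ = true ↔ ∃ x ∈ l, μ x ≠ ν x := by
  induction l with
  | nil => simp [diffClause, PropForm.eval]
  | cons x l ih =>
    simp only [diffClause, PropForm.eval, Bool.or_eq_true, ih, List.mem_cons, exists_eq_or_imp]
    refine or_congr ?_ Iff.rfl
    cases h : ν x <;> simp [PropForm.eval]

theorem exists_model_of_sat_Cn (T : Set (PropForm V)) (S : Set V) (ν : V → Bool)
    (h : SatSet ν (Cn S T)) : ∃ μ, SatSet μ T ∧ ∀ x ∈ S, μ x = ν x := by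
  by_contra hne
  have hclosed : IsClosed {μ : V → Bool | SatSet μ T} := by
    have : {μ : V → Bool | SatSet μ T} = ⋂ φ ∈ T, {μ | φ.eval μ = true} := by
      ext μ; simp [SatSet, Sat]
    rw [this]
    exact isClosed_biInter fun φ _ => isClosed_eq φ.continuous_eval continuous_const
  obtain ⟨F, hF⟩ := hclosed.isCompact.elim_finite_subfamily_closed
    (fun x : S => {μ : V → Bool | μ x = ν x})
    (fun x => isClosed_eq (continuous_apply _) continuous_const) (by
      rw [Set.eq_empty_iff_forall_notMem]
      rintro μ ⟨h1, h2⟩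
      exact hne ⟨μ, h1, fun x hx => Set.mem_iInter.1 h2 ⟨x, hx⟩⟩)
  have hmem : diffClause ν (F.toList.map Subtype.val) ∈ Cn S T := by
    refine ⟨fun x hx => ?_, fun μ hμ => ?_⟩
    · have := diffClause_vars _ _ hx
      simp only [Set.mem_setOf_eq, List.mem_map] at this
      obtain ⟨y, _, rfl⟩ := this
      exact y.2
    · refine (diffClause_eval _ _ _).2 ?_
      by_contra hc
      push Not at hc
      rw [Set.eq_empty_iff_forall_notMem] at hF
      refine hF μ ⟨hμ, Set.mem_iInter₂.2 fun x hx => ?_⟩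
      exact hc x (List.mem_map.2 ⟨x, Finset.mem_toList.2 hx, rfl⟩)
  obtain ⟨x, _, hx⟩ := (diffClause_eval _ _ _).1 (h _ hmem)
  exact hx rfl

theorem exists_model_extend (T : Set (PropForm V)) (R : Set V) (ν : V → Bool)
    (h : SatSet ν (Cn (varsOf T ∩ R) T)) :
    ∃ μ, SatSet μ T ∧ (∀ x ∈ R, μ x = ν x) ∧ ∀ x ∉ varsOf T, μ x = ν x := by
  classical
  obtain ⟨μ, hμ, hS⟩ := exists_model_of_sat_Cn T _ ν h
  refine ⟨fun x => if x ∈ varsOf T then μ x else ν x, fun φ hφ => ?_, fun x hx => ?_,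
    fun x hx => if_neg hx⟩
  · have : φ.eval (fun x => if x ∈ varsOf T then μ x else ν x) = φ.eval μ :=
      PropForm.eval_congr φ fun x hx => if_pos (Set.mem_biUnion hφ hx)
    exact this.trans (hμ φ hφ)
  · by_cases hT : x ∈ varsOf T
    · simpa [hT] using hS x ⟨hT, hx⟩
    · simp [hT]

theorem circLt_congr {P Q : Set V} {ν ν' μ μ' : V → Bool}
    (h1 : ∀ x ∈ P, ν x = ν' x) (h2 : ∀ x, x ∉ P ∪ Q → ν x = ν' x)
    (h3 : ∀ x ∈ P, μ x = μ' x) (h4 : ∀ x, x ∉ P ∪ Q → μ x = μ' x)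
    (h : circLt P Q ν μ) : circLt P Q ν' μ' := by
  have e1 : {x | x ∈ P ∧ ν x = true} = {x | x ∈ P ∧ ν' x = true} := by
    ext x; exact and_congr_right fun hx => by rw [h1 x hx]
  have e2 : {x | x ∈ P ∧ μ x = true} = {x | x ∈ P ∧ μ' x = true} := by
    ext x; exact and_congr_right fun hx => by rw [h3 x hx]
  obtain ⟨⟨ha, hb⟩, hc⟩ := h
  rw [e1, e2] at hb hc
  exact ⟨⟨fun x hx => by rw [← h2 x hx, ← h4 x hx, ha x hx], hb⟩, hc⟩

/-- Interpolation for Circumscription 2. -/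
theorem interpolation_circ2 {V : Type*} (T : Set (PropForm V)) (P Q : Set V)
    (hL : varsOf T ⊆ P ∪ Q) (L₂ : Set V) :
    Cn (varsOf T ∩ (L₂ ∪ P)) T ⊆ FormsOver (varsOf T) ∩ FormsOver (L₂ ∪ P) ∧
    EntailsSet T (Cn (varsOf T ∩ (L₂ ∪ P)) T) ∧
    ∀ φ ∈ FormsOver L₂,
      (CircEntails T P Q φ ↔
        CircEntails (Cn (varsOf T ∩ (L₂ ∪ P)) T) P Q φ) := by
  refine ⟨fun φ hφ => ⟨fun x hx => (hφ.1 hx).1, fun x hx => (hφ.1 hx).2⟩,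
    fun φ hφ => hφ.2, fun φ hφ => ⟨fun h ν hν => ?_, fun h ν hν => ?_⟩⟩
  · obtain ⟨μ, hμ, hR, hN⟩ := exists_model_extend T _ ν hν.1
    have hs : Sat μ φ := by
      refine h μ ⟨hμ, ?_⟩
      rintro ⟨κ, hκ, hlt⟩
      exact hν.2 ⟨κ, fun ψ hψ => hψ.2 κ hκ, circLt_congr (fun _ _ => rfl) (fun _ _ => rfl)
        (fun x hx => hR x (Or.inr hx)) (fun x hx => hN x fun hT => hx (hL hT)) hlt⟩
    exact (PropForm.eval_congr φ fun x hx => (hR x (Or.inl (hφ hx))).symm).trans hs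
  · refine h ν ⟨fun ψ hψ => hψ.2 ν hν.1, ?_⟩
    rintro ⟨κ, hκ, hlt⟩
    obtain ⟨μ, hμ, hR, hN⟩ := exists_model_extend T _ κ hκ
    exact hν.2 ⟨μ, hμ, circLt_congr (fun x hx => (hR x (Or.inr hx)).symm)
      (fun x hx => (hN x fun hT => hx (hL hT)).symm) (fun _ _ => rfl) (fun _ _ => rfl) hlt⟩

end NMR
end

section
/- The cautious analogue of interpolation between default theories fails: let b and c be distinct propositional variables, W₁ = W₂ = ∅, D₁ = { (⊤ : {b} / b), (⊤ : {¬b} / ¬b) }, and D₂ = { (b : {c} / c), (¬b : {c} / c) }. Then every extension of ⟨∅, D₁ ∪ D₂⟩ contains c (and there is at least one extension), yet there is no formula γ ∈ 𝓛({b}) such that ∅ |~_{D₁} γ and {γ} |~_{D₂} c; indeed every formula γ ∈ 𝓛({b}) with ∅ |~_{D₁} γ is a tautology, and for a tautology γ the theory ⟨{γ}, D₂⟩ does not cautiously entail c. -/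
namespace NMR

variable {V : Type*}

/-- A Reiter default: prerequisite, a finite nonempty set of justifications,
and a consequent. -/
structure Default (V : Type*) where
  pre : PropForm V
  just : Set (PropForm V)
  just_finite : just.Finite
  just_nonempty : just.Nonempty
  cons : PropForm V

/-- All propositional consequences of `T`. -/
def CnAll (T : Set (PropForm V)) : Set (PropForm V) := {φ | Entails T φ}

/-- The closure conditions defining `Γ(S₀)` for the default theory `⟨W, D⟩`:
`W ⊆ S`, `Cn(S) = S`, and closure under the defaults applicable w.r.t. `S₀`. -/
def DLClosed (W : Set (PropForm V)) (D : Set (Default V)) (S₀ S : Set (PropForm V)) : Prop :=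
  W ⊆ S ∧ CnAll S = S ∧
    ∀ d ∈ D, d.pre ∈ S → (∀ β ∈ d.just, PropForm.neg β ∉ S₀) → d.cons ∈ S

/-- `Γ(S₀)`: the least set satisfying the closure conditions (the intersection
of all such sets, which is itself such a set). -/
def GammaOp (W : Set (PropForm V)) (D : Set (Default V)) (S₀ : Set (PropForm V)) :
    Set (PropForm V) := ⋂₀ {S | DLClosed W D S₀ S}

/-- `E` is an extension of `⟨W, D⟩` iff `Γ(E) = E`. -/
def IsExtension (W : Set (PropForm V)) (D : Set (Default V)) (E : Set (PropForm V)) : Prop :=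
  GammaOp W D E = E

/-- Cautious entailment `W |~_D φ`. -/
def Cautious (W : Set (PropForm V)) (D : Set (Default V)) (φ : PropForm V) : Prop :=
  ∀ E : Set (PropForm V), IsExtension W D E → φ ∈ E

/-- Brave entailment `W |~^b_D φ`. -/
def Brave (W : Set (PropForm V)) (D : Set (Default V)) (φ : PropForm V) : Prop :=
  ∃ E : Set (PropForm V), IsExtension W D E ∧ φ ∈ E

/-- `L(D)`: the variables occurring in prerequisites, justifications or
consequents of defaults in `D`. -/
def varsD (D : Set (Default V)) : Set V :=
  ⋃ d ∈ D, (d.pre.vars ∪ (⋃ β ∈ d.just, PropForm.vars β) ∪ d.cons.vars)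

/-- The defaults `(⊤ : {b} / b)` and `(⊤ : {¬b} / ¬b)`. -/
def counterD₁ (b : V) : Set (Default V) :=
  {⟨PropForm.tru, {PropForm.var b}, Set.finite_singleton _, Set.singleton_nonempty _,
      PropForm.var b⟩,
    ⟨PropForm.tru, {PropForm.neg (PropForm.var b)}, Set.finite_singleton _,
      Set.singleton_nonempty _, PropForm.neg (PropForm.var b)⟩}

/-- The defaults `(b : {c} / c)` and `(¬b : {c} / c)`. -/
def counterD₂ (b c : V) : Set (Default V) :=
  {⟨PropForm.var b, {PropForm.var c}, Set.finite_singleton _, Set.singleton_nonempty _,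
      PropForm.var c⟩,
    ⟨PropForm.neg (PropForm.var b), {PropForm.var c}, Set.finite_singleton _,
      Set.singleton_nonempty _, PropForm.var c⟩}

theorem cnAll_idem (T : Set (PropForm V)) : CnAll (CnAll T) = CnAll T := by
  ext φ
  constructor
  · intro h ν hν
    exact h ν (fun ψ hψ => hψ ν hν)
  · intro h ν hν
    exact hν φ h

theorem gamma_closed (W : Set (PropForm V)) (D : Set (Default V)) (S₀ : Set (PropForm V)) :
    DLClosed W D S₀ (GammaOp W D S₀) := by
  refine ⟨fun φ hφ S hS => hS.1 hφ, ?_, fun d hd hp hj S hS => hS.2.2 d hd (hp S hS) hj⟩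
  ext φ
  constructor
  · intro h S hS
    rw [← hS.2.1]
    exact fun ν hν => h ν (fun ψ hψ => hν ψ (hψ S hS))
  · intro h ν hν
    exact hν φ h

theorem ext_of {W : Set (PropForm V)} {D : Set (Default V)} {T : Set (PropForm V)}
    (h1 : DLClosed W D (CnAll T) (CnAll T))
    (h2 : ∀ S, DLClosed W D (CnAll T) S → T ⊆ S) : IsExtension W D (CnAll T) := by
  apply Set.Subset.antisymm
  · exact fun φ hφ => hφ _ h1
  · intro φ hφ S hS
    rw [← hS.2.1]
    exact fun ν hν => hφ ν (fun ψ hψ => hν ψ (h2 S hS hψ))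

theorem not_mem_cn {T : Set (PropForm V)} {φ : PropForm V} (ν : V → Bool)
    (h : SatSet ν T) (hφ : φ.eval ν = false) : φ ∉ CnAll T := by
  intro hm
  have := hm ν h
  simp [Sat, hφ] at this

theorem mem_cn {T : Set (PropForm V)} {φ : PropForm V} (h : φ ∈ T) : φ ∈ CnAll T :=
  fun _ hν => hν φ h

theorem neg_neg_mem {T : Set (PropForm V)} {φ : PropForm V} (hT : CnAll T = T) (h : φ ∈ T) :
    PropForm.neg (PropForm.neg φ) ∈ T := by
  rw [← hT]
  intro ν hν
  have := hν φ h
  simpa [Sat, PropForm.eval] using this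

theorem tru_mem {T : Set (PropForm V)} (hT : CnAll T = T) : PropForm.tru ∈ T := by
  rw [← hT]
  intro ν _
  simp [Sat, PropForm.eval]

theorem closed_d1 (b : V) (S₀ S : Set (PropForm V)) :
    (∀ d ∈ counterD₁ b, d.pre ∈ S → (∀ β ∈ d.just, PropForm.neg β ∉ S₀) → d.cons ∈ S) ↔
    (PropForm.tru ∈ S → (PropForm.var b).neg ∉ S₀ → PropForm.var b ∈ S) ∧
    (PropForm.tru ∈ S → (PropForm.var b).neg.neg ∉ S₀ → (PropForm.var b).neg ∈ S) := by
  simp [counterD₁]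

theorem closed_d2 (b c : V) (S₀ S : Set (PropForm V)) :
    (∀ d ∈ counterD₂ b c, d.pre ∈ S → (∀ β ∈ d.just, PropForm.neg β ∉ S₀) → d.cons ∈ S) ↔
    (PropForm.var b ∈ S → (PropForm.var c).neg ∉ S₀ → PropForm.var c ∈ S) ∧
    ((PropForm.var b).neg ∈ S → (PropForm.var c).neg ∉ S₀ → PropForm.var c ∈ S) := by
  simp [counterD₂]

theorem closed_d12 (b c : V) (S₀ S : Set (PropForm V)) :
    (∀ d ∈ counterD₁ b ∪ counterD₂ b c,
      d.pre ∈ S → (∀ β ∈ d.just, PropForm.neg β ∉ S₀) → d.cons ∈ S) ↔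
    ((PropForm.tru ∈ S → (PropForm.var b).neg ∉ S₀ → PropForm.var b ∈ S) ∧
    (PropForm.tru ∈ S → (PropForm.var b).neg.neg ∉ S₀ → (PropForm.var b).neg ∈ S)) ∧
    (PropForm.var b ∈ S → (PropForm.var c).neg ∉ S₀ → PropForm.var c ∈ S) ∧
    ((PropForm.var b).neg ∈ S → (PropForm.var c).neg ∉ S₀ → PropForm.var c ∈ S) := by
  rw [← closed_d1, ← closed_d2]
  simp only [Set.mem_union, or_imp, forall_and]

theorem part1 (b c : V) (hbc : b ≠ c) :
    Cautious (∅ : Set (PropForm V)) (counterD₁ b ∪ counterD₂ b c) (PropForm.var c) := by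
  classical
  intro E hE
  have hc := gamma_closed ∅ (counterD₁ b ∪ counterD₂ b c) E
  have hmin : ∀ S, DLClosed ∅ (counterD₁ b ∪ counterD₂ b c) E S → E ⊆ S := by
    intro S hS φ hφ
    rw [← hE] at hφ
    exact hφ S hS
  rw [hE] at hc
  obtain ⟨-, hcn, hd⟩ := hc
  rw [closed_d12] at hd
  obtain ⟨⟨d1, d2⟩, d3, d4⟩ := hd
  by_cases hnc : (PropForm.var c).neg ∈ E
  · exfalso
    by_cases hnb : (PropForm.var b).neg ∈ E
    · have : E ⊆ CnAll {(PropForm.var b).neg} := by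
        apply hmin
        refine ⟨Set.empty_subset _, cnAll_idem _, ?_⟩
        rw [closed_d12]
        exact ⟨⟨fun _ h => absurd hnb h, fun _ _ => mem_cn rfl⟩,
          fun _ h => absurd hnc h, fun _ h => absurd hnc h⟩
      refine not_mem_cn (fun v => decide (v = c)) ?_ ?_ (this hnc)
      · rintro φ rfl
        simp [Sat, PropForm.eval, hbc]
      · simp [PropForm.eval]
    · have hb := d1 (tru_mem hcn) hnb
      have hnn := neg_neg_mem hcn hb
      have : E ⊆ CnAll {PropForm.var b} := by
        apply hmin
        refine ⟨Set.empty_subset _, cnAll_idem _, ?_⟩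
        rw [closed_d12]
        exact ⟨⟨fun _ _ => mem_cn rfl, fun _ h => absurd hnn h⟩,
          fun _ h => absurd hnc h, fun _ h => absurd hnc h⟩
      refine not_mem_cn (fun _ => true) ?_ ?_ (this hnc)
      · rintro φ rfl
        simp [Sat, PropForm.eval]
      · simp [PropForm.eval]
  · by_cases hnb : (PropForm.var b).neg ∈ E
    · exact d4 hnb hnc
    · exact d3 (d1 (tru_mem hcn) hnb) hnc

theorem part2 (b c : V) : IsExtension (∅ : Set (PropForm V)) (counterD₁ b ∪ counterD₂ b c)
    (CnAll {PropForm.var b, PropForm.var c}) := by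
  have hs : SatSet (fun _ => true) ({PropForm.var b, PropForm.var c} : Set (PropForm V)) := by
    rintro φ (rfl | rfl) <;> simp [Sat, PropForm.eval]
  have hb : (PropForm.var b).neg ∉ CnAll {PropForm.var b, PropForm.var c} :=
    not_mem_cn _ hs (by simp [PropForm.eval])
  have hc : (PropForm.var c).neg ∉ CnAll {PropForm.var b, PropForm.var c} :=
    not_mem_cn _ hs (by simp [PropForm.eval])
  have mb : PropForm.var b ∈ CnAll {PropForm.var b, PropForm.var c} := mem_cn (by simp)
  have mc : PropForm.var c ∈ CnAll {PropForm.var b, PropForm.var c} := mem_cn (by simp)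
  apply ext_of
  · refine ⟨Set.empty_subset _, cnAll_idem _, ?_⟩
    rw [closed_d12]
    exact ⟨⟨fun _ _ => mb, fun _ h => absurd (neg_neg_mem (cnAll_idem _) mb) h⟩,
      fun _ _ => mc, fun _ _ => mc⟩
  · rintro S ⟨-, hcn, hd⟩
    rw [closed_d12] at hd
    have h1 := hd.1.1 (tru_mem hcn) hb
    rintro φ (rfl | rfl)
    · exact h1
    · exact hd.2.1 h1 hc

theorem ext_b (b : V) : IsExtension (∅ : Set (PropForm V)) (counterD₁ b)
    (CnAll {PropForm.var b}) := by
  have hb : (PropForm.var b).neg ∉ CnAll {PropForm.var b} :=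
    not_mem_cn (fun _ => true) (by rintro φ rfl; simp [Sat, PropForm.eval])
      (by simp [PropForm.eval])
  have mb : PropForm.var b ∈ CnAll {PropForm.var b} := mem_cn (by simp)
  apply ext_of
  · refine ⟨Set.empty_subset _, cnAll_idem _, ?_⟩
    rw [closed_d1]
    exact ⟨fun _ _ => mb, fun _ h => absurd (neg_neg_mem (cnAll_idem _) mb) h⟩
  · rintro S ⟨-, hcn, hd⟩
    rw [closed_d1] at hd
    rintro φ rfl
    exact hd.1 (tru_mem hcn) hb

theorem ext_nb (b : V) : IsExtension (∅ : Set (PropForm V)) (counterD₁ b)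
    (CnAll {(PropForm.var b).neg}) := by
  have hb : (PropForm.var b).neg.neg ∉ CnAll {(PropForm.var b).neg} :=
    not_mem_cn (fun _ => false) (by rintro φ rfl; simp [Sat, PropForm.eval])
      (by simp [PropForm.eval])
  have mb : (PropForm.var b).neg ∈ CnAll {(PropForm.var b).neg} := mem_cn (by simp)
  apply ext_of
  · refine ⟨Set.empty_subset _, cnAll_idem _, ?_⟩
    rw [closed_d1]
    exact ⟨fun _ h => absurd mb h, fun _ _ => mb⟩
  · rintro S ⟨-, hcn, hd⟩
    rw [closed_d1] at hd
    rintro φ rfl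
    exact hd.2 (tru_mem hcn) hb

theorem part3 (b : V) (γ : PropForm V)
    (h : Cautious (∅ : Set (PropForm V)) (counterD₁ b) γ) : Tautology γ := by
  intro ν
  cases hν : ν b
  · exact h _ (ext_nb b) ν (by rintro φ rfl; simp [Sat, PropForm.eval, hν])
  · exact h _ (ext_b b) ν (by rintro φ rfl; simp [Sat, PropForm.eval, hν])

theorem part4 (b c : V) (γ : PropForm V) (hγ : Tautology γ) :
    ¬ Cautious {γ} (counterD₂ b c) (PropForm.var c) := by
  intro h
  have he (ν : V → Bool) : SatSet ν (∅ : Set (PropForm V)) := fun φ hφ => absurd hφ (by simp)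
  have hE : IsExtension {γ} (counterD₂ b c) (CnAll ∅) := by
    apply ext_of
    · refine ⟨?_, cnAll_idem _, ?_⟩
      · rintro φ rfl ν _
        exact hγ ν
      · rw [closed_d2]
        exact ⟨fun hb => absurd hb (not_mem_cn (fun _ => false) (he _) (by simp [PropForm.eval])),
          fun hb => absurd hb (not_mem_cn (fun _ => true) (he _) (by simp [PropForm.eval]))⟩
    · exact fun S _ => Set.empty_subset _
  exact not_mem_cn (fun _ => false) (he _) (by simp [PropForm.eval]) (h _ hE)

/-- the cautious analogue of interpolation between default
theories fails. -/
theorem cautious_interpolation_fails {V : Type*} [Finite V] (b c : V) (hbc : b ≠ c) :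
    Cautious (∅ : Set (PropForm V)) (counterD₁ b ∪ counterD₂ b c) (PropForm.var c) ∧
    (∃ E : Set (PropForm V),
      IsExtension (∅ : Set (PropForm V)) (counterD₁ b ∪ counterD₂ b c) E) ∧
    (∀ γ : PropForm V, γ.vars ⊆ {b} →
      Cautious (∅ : Set (PropForm V)) (counterD₁ b) γ → Tautology γ) ∧
    (∀ γ : PropForm V, Tautology γ →
      ¬ Cautious {γ} (counterD₂ b c) (PropForm.var c)) ∧
    ¬ ∃ γ : PropForm V, γ.vars ⊆ {b} ∧
        Cautious (∅ : Set (PropForm V)) (counterD₁ b) γ ∧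
        Cautious {γ} (counterD₂ b c) (PropForm.var c) := by
  refine ⟨part1 b c hbc, ⟨_, part2 b c⟩, fun γ _ => part3 b γ, part4 b c, ?_⟩
  rintro ⟨γ, -, h1, h2⟩
  exact part4 b c γ (part3 b γ h1) h2

end NMR
end
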